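/- arXiv:2502.13787 — 8 statements merged into one kernel-verified Lean document; each statement's English description precedes it below -/
import Mathlib

section
/- The hypergraph on the 24 vertices {1,2,3,4,5,6,7,8,B,E,F,G,H,K,N,R,S,U,V,W,a,b,d,e} with the 24 hyperedges 125E, 12NW, 15HK, 18BE, 25FG, 267E, 345E, 34NW, 3Nbd, 3SUW, 4Nae, 4RVW, 67HK, 6HVd, 6KSa, 7HUe, 7KRb, 8BFG, 8FVb, 8GUa, BFSe, BGRd, RVbd, SUae (the Peres 24-24 set) is a KS hypergraph, i.e., it admits no admissible {0,1}-assignment. -/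
def peres2424 : List (Finset ℕ) :=
  [{1, 2, 5, 14},
   {1, 2, 23, 32},
   {1, 5, 17, 20},
   {1, 8, 11, 14},
   {2, 5, 15, 16},
   {2, 6, 7, 14},
   {3, 4, 5, 14},
   {3, 4, 23, 32},
   {3, 23, 37, 39},
   {3, 28, 30, 32},
   {4, 23, 36, 40},
   {4, 27, 31, 32},
   {6, 7, 17, 20},
   {6, 17, 31, 39},
   {6, 20, 28, 36},
   {7, 17, 30, 40},
   {7, 20, 27, 37},
   {8, 11, 15, 16},
   {8, 15, 31, 37},
   {8, 16, 30, 36},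
   {11, 15, 28, 40},
   {11, 16, 27, 39},
   {27, 31, 37, 39},
   {28, 30, 36, 40}]

def admissible (E : List (Finset ℕ)) (f : ℕ → Bool) : Prop :=
  ∀ e ∈ E, (e.filter (fun v => f v = true)).card = 1

theorem peres_edge (f : ℕ → Bool) (a b c d : ℕ) (hab : a < b) (hbc : b < c) (hcd : c < d)
    (h : (({a, b, c, d} : Finset ℕ).filter (fun v => f v = true)).card = 1) :
    (f a).toNat + (f b).toNat + (f c).toNat + (f d).toNat = 1 := by
  have h1 : a ∉ ({b, c, d} : Finset ℕ) := by simp; omega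
  have h2 : b ∉ ({c, d} : Finset ℕ) := by simp; omega
  have h3 : c ∉ ({d} : Finset ℕ) := by simp; omega
  rw [Finset.card_filter, Finset.sum_insert h1, Finset.sum_insert h2, Finset.sum_insert h3,
    Finset.sum_singleton] at h
  revert h
  cases f a <;> cases f b <;> cases f c <;> cases f d <;> decide

theorem peres2424_is_KS : ¬ ∃ f : ℕ → Bool, admissible peres2424 f := by
  rintro ⟨f, hf⟩
  have e0 := peres_edge f 1 2 5 14 (by decide) (by decide) (by decide)
    (hf _ (by simp [peres2424]))
  have e1 := peres_edge f 1 2 23 32 (by decide) (by decide) (by decide)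
    (hf _ (by simp [peres2424]))
  have e2 := peres_edge f 1 5 17 20 (by decide) (by decide) (by decide)
    (hf _ (by simp [peres2424]))
  have e3 := peres_edge f 1 8 11 14 (by decide) (by decide) (by decide)
    (hf _ (by simp [peres2424]))
  have e4 := peres_edge f 2 5 15 16 (by decide) (by decide) (by decide)
    (hf _ (by simp [peres2424]))
  have e5 := peres_edge f 2 6 7 14 (by decide) (by decide) (by decide)
    (hf _ (by simp [peres2424]))
  have e6 := peres_edge f 3 4 5 14 (by decide) (by decide) (by decide)
    (hf _ (by simp [peres2424]))
  have e7 := peres_edge f 3 4 23 32 (by decide) (by decide) (by decide)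
    (hf _ (by simp [peres2424]))
  have e8 := peres_edge f 3 23 37 39 (by decide) (by decide) (by decide)
    (hf _ (by simp [peres2424]))
  have e9 := peres_edge f 3 28 30 32 (by decide) (by decide) (by decide)
    (hf _ (by simp [peres2424]))
  have e10 := peres_edge f 4 23 36 40 (by decide) (by decide) (by decide)
    (hf _ (by simp [peres2424]))
  have e11 := peres_edge f 4 27 31 32 (by decide) (by decide) (by decide)
    (hf _ (by simp [peres2424]))
  have e12 := peres_edge f 6 7 17 20 (by decide) (by decide) (by decide)
    (hf _ (by simp [peres2424]))
  have e13 := peres_edge f 6 17 31 39 (by decide) (by decide) (by decide)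
    (hf _ (by simp [peres2424]))
  have e14 := peres_edge f 6 20 28 36 (by decide) (by decide) (by decide)
    (hf _ (by simp [peres2424]))
  have e15 := peres_edge f 7 17 30 40 (by decide) (by decide) (by decide)
    (hf _ (by simp [peres2424]))
  have e16 := peres_edge f 7 20 27 37 (by decide) (by decide) (by decide)
    (hf _ (by simp [peres2424]))
  have e17 := peres_edge f 8 11 15 16 (by decide) (by decide) (by decide)
    (hf _ (by simp [peres2424]))
  have e18 := peres_edge f 8 15 31 37 (by decide) (by decide) (by decide)
    (hf _ (by simp [peres2424]))
  have e19 := peres_edge f 8 16 30 36 (by decide) (by decide) (by decide)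
    (hf _ (by simp [peres2424]))
  have e20 := peres_edge f 11 15 28 40 (by decide) (by decide) (by decide)
    (hf _ (by simp [peres2424]))
  have e21 := peres_edge f 11 16 27 39 (by decide) (by decide) (by decide)
    (hf _ (by simp [peres2424]))
  have e22 := peres_edge f 27 31 37 39 (by decide) (by decide) (by decide)
    (hf _ (by simp [peres2424]))
  have e23 := peres_edge f 28 30 36 40 (by decide) (by decide) (by decide)
    (hf _ (by simp [peres2424]))
  clear hf
  generalize (f 1).toNat = x1 at *
  generalize (f 2).toNat = x2 at *
  generalize (f 3).toNat = x3 at *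
  generalize (f 4).toNat = x4 at *
  generalize (f 5).toNat = x5 at *
  generalize (f 6).toNat = x6 at *
  generalize (f 7).toNat = x7 at *
  generalize (f 8).toNat = x8 at *
  generalize (f 11).toNat = x11 at *
  generalize (f 14).toNat = x14 at *
  generalize (f 15).toNat = x15 at *
  generalize (f 16).toNat = x16 at *
  generalize (f 17).toNat = x17 at *
  generalize (f 20).toNat = x20 at *
  generalize (f 23).toNat = x23 at *
  generalize (f 27).toNat = x27 at *
  generalize (f 28).toNat = x28 at *
  generalize (f 30).toNat = x30 at *
  generalize (f 31).toNat = x31 at *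
  generalize (f 32).toNat = x32 at *
  generalize (f 36).toNat = x36 at *
  generalize (f 37).toNat = x37 at *
  generalize (f 39).toNat = x39 at *
  generalize (f 40).toNat = x40 at *
  have h1 : x1 = 1 ∨ x2 = 1 ∨ x5 = 1 ∨ x14 = 1 := by clear * - e0; omega
  have h2 : x27 = 1 ∨ x31 = 1 ∨ x37 = 1 ∨ x39 = 1 := by clear * - e22; omega
  rcases h1 with h1 | h1 | h1 | h1 <;> rcases h2 with h2 | h2 | h2 | h2 <;> omega
end

section
/- The hypergraph on 18 vertices {1,...,9,A,...,I} with the 9 hyperedges 1234, 5678, 9ABC, DEC8, FGB7, HGA4, IE93, IF62, HD51 (the CEG 18-9 set) is a critical KS hypergraph: it admits no admissible {0,1}-assignment, and for every one of its 9 hyperedges, deleting that hyperedge yields a hypergraph that admits an admissible {0,1}-assignment. -/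
def ceg189 : List (Finset ℕ) :=
  [{1, 2, 3, 4},
   {5, 6, 7, 8},
   {9, 10, 11, 12},
   {13, 14, 12, 8},
   {15, 16, 11, 7},
   {17, 16, 10, 4},
   {18, 14, 9, 3},
   {18, 15, 6, 2},
   {17, 13, 5, 1}]

theorem ceg189_critical_KS :
    (¬ ∃ f : ℕ → Bool, admissible ceg189 f) ∧
    ∀ e ∈ ceg189, ∃ f : ℕ → Bool,
      ∀ e' ∈ ceg189, e' ≠ e → (e'.filter (fun v => f v = true)).card = 1 := by
  constructor
  · -- Parity: every vertex lies in exactly two of the nine hyperedges.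
    rintro ⟨f, hf⟩
    have key : ∃ g : ℕ → ℕ, ∀ e ∈ ceg189, ∑ v ∈ e, g v = 1 := by
      refine ⟨fun v => if f v = true then 1 else 0, fun e he => ?_⟩
      exact (Finset.card_filter _ _).symm.trans (hf e he)
    obtain ⟨g, hg⟩ := key
    simp [ceg189] at hg
    omega
  · intro e he
    simp only [ceg189, List.mem_cons, List.not_mem_nil, or_false] at he
    rcases he with rfl | rfl | rfl | rfl | rfl | rfl | rfl | rfl | rfl
    · exact ⟨fun v => decide (v ∈ ([5, 10, 14, 15] : List ℕ)), by decide⟩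
    · exact ⟨fun v => decide (v ∈ ([1, 10, 14, 15] : List ℕ)), by decide⟩
    · exact ⟨fun v => decide (v ∈ ([1, 6, 14, 16] : List ℕ)), by decide⟩
    · exact ⟨fun v => decide (v ∈ ([1, 6, 9, 16] : List ℕ)), by decide⟩
    · exact ⟨fun v => decide (v ∈ ([1, 6, 10, 14] : List ℕ)), by decide⟩
    · exact ⟨fun v => decide (v ∈ ([1, 6, 11, 14] : List ℕ)), by decide⟩
    · exact ⟨fun v => decide (v ∈ ([1, 6, 12, 16] : List ℕ)), by decide⟩
    · exact ⟨fun v => decide (v ∈ ([1, 7, 10, 14] : List ℕ)), by decide⟩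
    · exact ⟨fun v => decide (v ∈ ([2, 7, 10, 14] : List ℕ)), by decide⟩
end

section
/- The hypergraph on 20 vertices {1,...,9,A,...,K} with the 11 hyperedges 1234, 5674, 8973, ABC9, DEC8, FGE6, HGB5, IJE2, KJB1, IFDE, KHAB (the Kernaghan 20-11 set) is a critical KS hypergraph: it admits no admissible {0,1}-assignment, and for every one of its 11 hyperedges, deleting that hyperedge yields a hypergraph that admits an admissible {0,1}-assignment. -/
def kernaghan2011 : List (Finset ℕ) :=
  [{1, 2, 3, 4},
   {5, 6, 7, 4},
   {8, 9, 7, 3},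
   {10, 11, 12, 9},
   {13, 14, 12, 8},
   {15, 16, 14, 6},
   {17, 16, 11, 5},
   {18, 19, 14, 2},
   {20, 19, 11, 1},
   {18, 15, 13, 14},
   {20, 17, 10, 11}]

theorem kernaghan2011_critical_KS :
    (¬ ∃ f : ℕ → Bool, admissible kernaghan2011 f) ∧
    ∀ e ∈ kernaghan2011, ∃ f : ℕ → Bool,
      ∀ e' ∈ kernaghan2011, e' ≠ e → (e'.filter (fun v => f v = true)).card = 1 := by
  constructor
  · rintro ⟨f, hf⟩
    simp only [admissible, kernaghan2011, List.forall_mem_cons, Finset.card_filter] at hf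
    obtain ⟨h1, h2, h3, h4, h5, h6, h7, h8, h9, h10, h11, -⟩ := hf
    have key : ∀ a b c d : ℕ, a ∉ ({b, c, d} : Finset ℕ) → b ∉ ({c, d} : Finset ℕ) →
        c ∉ ({d} : Finset ℕ) → ∀ g : ℕ → ℕ,
        ∑ x ∈ ({a, b, c, d} : Finset ℕ), g x = g a + (g b + (g c + g d)) := by
      intro a b c d ha hb hc g
      rw [Finset.sum_insert ha, Finset.sum_insert hb, Finset.sum_insert hc, Finset.sum_singleton]
    generalize (fun n => if f n = true then 1 else 0 : ℕ → ℕ) = c at *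
    -- every vertex lies in an even number of hyperedges, but there are 11 hyperedges
    rw [key _ _ _ _ (by decide) (by decide) (by decide)] at h1 h2 h3 h4 h5 h6 h7 h8 h9 h10 h11
    omega
  · simp only [kernaghan2011, List.forall_mem_cons]
    refine ⟨?_, ?_, ?_, ?_, ?_, ?_, ?_, ?_, ?_, ?_, ?_, by simp⟩
    · exact ⟨fun n => decide (n ∈ ([2, 3, 6, 11, 13] : List ℕ)), by decide⟩
    · exact ⟨fun n => decide (n ∈ ([2, 6, 7, 11, 13] : List ℕ)), by decide⟩
    · exact ⟨fun n => decide (n ∈ ([2, 6, 11, 13] : List ℕ)), by decide⟩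
    · exact ⟨fun n => decide (n ∈ ([2, 6, 9, 11, 13] : List ℕ)), by decide⟩
    · exact ⟨fun n => decide (n ∈ ([2, 6, 8, 11, 13] : List ℕ)), by decide⟩
    · exact ⟨fun n => decide (n ∈ ([2, 7, 11, 13] : List ℕ)), by decide⟩
    · exact ⟨fun n => decide (n ∈ ([1, 7, 10, 14] : List ℕ)), by decide⟩
    · exact ⟨fun n => decide (n ∈ ([3, 6, 11, 13] : List ℕ)), by decide⟩
    · exact ⟨fun n => decide (n ∈ ([3, 5, 10, 14] : List ℕ)), by decide⟩
    · exact ⟨fun n => decide (n ∈ ([2, 6, 8, 11] : List ℕ)), by decide⟩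
    · exact ⟨fun n => decide (n ∈ ([1, 5, 9, 14] : List ℕ)), by decide⟩
end

section
/- The hypergraph on 40 vertices {1,...,9,A,...,Z,a,...,e} with the 40 hyperedges 248N, 359O, 6ADc, 67Ed, 78Fe, 89Ba, BDHW, BEKZ, 1BLV, 9ACb, 4EOY, 3GKS, 4GHT, 7HRb, 5HIU, 8ISc, CEIX, 1IJQ, 2JKR, 9JTd, DFJY, 256L, LSYb, LTXe, 137M, 2CMW, MTZc, MUYa, 3DNX, 14AP, 5FPZ, PRXa, PSWd, 6GQa, NQZb, OQWe, AKUe, CFGV, NUVd, ORVc (the Penrose 40-40 set) is a KS hypergraph, i.e., it admits no admissible {0,1}-assignment. -/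
def penrose4040 : List (Finset ℕ) :=
  [{2, 4, 8, 23},
   {3, 5, 9, 24},
   {6, 10, 13, 38},
   {6, 7, 14, 39},
   {7, 8, 15, 40},
   {8, 9, 11, 36},
   {11, 13, 17, 32},
   {11, 14, 20, 35},
   {1, 11, 21, 31},
   {9, 10, 12, 37},
   {4, 14, 24, 34},
   {3, 16, 20, 28},
   {4, 16, 17, 29},
   {7, 17, 27, 37},
   {5, 17, 18, 30},
   {8, 18, 28, 38},
   {12, 14, 18, 33},
   {1, 18, 19, 26},
   {2, 19, 20, 27},
   {9, 19, 29, 39},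
   {13, 15, 19, 34},
   {2, 5, 6, 21},
   {21, 28, 34, 37},
   {21, 29, 33, 40},
   {1, 3, 7, 22},
   {2, 12, 22, 32},
   {22, 29, 35, 38},
   {22, 30, 34, 36},
   {3, 13, 23, 33},
   {1, 4, 10, 25},
   {5, 15, 25, 35},
   {25, 27, 33, 36},
   {25, 28, 32, 39},
   {6, 16, 26, 36},
   {23, 26, 35, 37},
   {24, 26, 32, 40},
   {10, 20, 30, 40},
   {12, 15, 16, 31},
   {23, 30, 31, 39},
   {24, 27, 31, 38}]

/-- The hyperedges as lists. -/
def edgeLists : List (List ℕ) :=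
  [[2, 4, 8, 23],
   [3, 5, 9, 24],
   [6, 10, 13, 38],
   [6, 7, 14, 39],
   [7, 8, 15, 40],
   [8, 9, 11, 36],
   [11, 13, 17, 32],
   [11, 14, 20, 35],
   [1, 11, 21, 31],
   [9, 10, 12, 37],
   [4, 14, 24, 34],
   [3, 16, 20, 28],
   [4, 16, 17, 29],
   [7, 17, 27, 37],
   [5, 17, 18, 30],
   [8, 18, 28, 38],
   [12, 14, 18, 33],
   [1, 18, 19, 26],
   [2, 19, 20, 27],
   [9, 19, 29, 39],
   [13, 15, 19, 34],
   [2, 5, 6, 21],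
   [21, 28, 34, 37],
   [21, 29, 33, 40],
   [1, 3, 7, 22],
   [2, 12, 22, 32],
   [22, 29, 35, 38],
   [22, 30, 34, 36],
   [3, 13, 23, 33],
   [1, 4, 10, 25],
   [5, 15, 25, 35],
   [25, 27, 33, 36],
   [25, 28, 32, 39],
   [6, 16, 26, 36],
   [23, 26, 35, 37],
   [24, 26, 32, 40],
   [10, 20, 30, 40],
   [12, 15, 16, 31],
   [23, 30, 31, 39],
   [24, 27, 31, 38]]

/-- Each listed hyperedge has exactly one vertex assigned `true`. -/
def GoodFor (f : ℕ → Bool) (E : List (List ℕ)) : Prop :=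
  ∀ e ∈ E, ∃ v ∈ e, f v = true ∧ ∀ w ∈ e, f w = true → w = v

/-- Membership test. -/
def hasVertex (v : ℕ) : List ℕ → Bool
  | [] => false
  | a :: l => Nat.beq v a || hasVertex v l

theorem hasVertex_iff (v : ℕ) (l : List ℕ) : hasVertex v l = true ↔ v ∈ l := by
  induction l with
  | nil => simp [hasVertex]
  | cons a l ih => simp [hasVertex, ih]

/-- Vertices other than `v` sharing a hyperedge with `v`. -/
def nbrs (v : ℕ) (E : List (List ℕ)) : List ℕ :=
  ((E.filter (hasVertex v)).flatten).filter (fun w => !(Nat.beq w v))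

/-- Simplify the hyperedges after assigning `true` to `v`. -/
def reduceAt (v : ℕ) (E : List (List ℕ)) : List (List ℕ) :=
  let N := nbrs v E
  (E.filter (fun e => !(hasVertex v e))).map (fun e => e.filter (fun w => !(hasVertex w N)))

/-- A shortest hyperedge. -/
def pick : List ℕ → List (List ℕ) → List ℕ
  | e, [] => e
  | e, a :: E => bif Nat.blt a.length e.length then pick a E else pick e E

theorem pick_mem (e : List ℕ) (E : List (List ℕ)) : pick e E ∈ e :: E := by
  induction E generalizing e with
  | nil => simp [pick]
  | cons a E ih =>
    have h1 := ih a
    have h2 := ih e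
    unfold pick
    simp only [List.mem_cons] at h1 h2 ⊢
    cases Nat.blt a.length e.length <;> simp only [cond_true, cond_false] <;> tauto

/-- Branching refutation search. -/
def refute : ℕ → List (List ℕ) → Bool
  | 0, _ => false
  | _ + 1, [] => false
  | n + 1, a :: E => (pick a E).all (fun v => refute n (reduceAt v (a :: E)))

theorem goodFor_reduceAt (f : ℕ → Bool) (v : ℕ) (E : List (List ℕ)) (hv : f v = true)
    (h : GoodFor f E) : GoodFor f (reduceAt v E) := by
  have hN : ∀ w, f w = true → hasVertex w (nbrs v E) = false := by
    intro w hw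
    rw [Bool.eq_false_iff]
    intro hc
    rw [hasVertex_iff] at hc
    simp only [nbrs, List.mem_filter, List.mem_flatten, hasVertex_iff] at hc
    obtain ⟨⟨e, ⟨he, hve⟩, hwe⟩, hne⟩ := hc
    obtain ⟨u, _, _, hu⟩ := h e he
    have : w = v := (hu w hwe hw).trans (hu v hve hv).symm
    simp [this] at hne
  intro e' he'
  simp only [reduceAt, List.mem_map, List.mem_filter] at he'
  obtain ⟨e, ⟨he, _⟩, rfl⟩ := he'
  obtain ⟨u, hu, hfu, huniq⟩ := h e he
  refine ⟨u, ?_, hfu, ?_⟩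
  · simp [List.mem_filter, hu, hN u hfu]
  · intro w hw
    exact huniq w (List.mem_filter.1 hw).1

theorem refute_sound (f : ℕ → Bool) (n : ℕ) (E : List (List ℕ)) (h : refute n E = true) :
    ¬ GoodFor f E := by
  induction n generalizing E with
  | zero => simp [refute] at h
  | succ n ih =>
    cases E with
    | nil => simp [refute] at h
    | cons a E =>
      intro hg
      obtain ⟨v, hv, hfv, _⟩ := hg _ (pick_mem a E)
      simp only [refute, List.all_eq_true] at h
      exact ih _ (h v hv) (goodFor_reduceAt f v _ hfv hg)

theorem refute_edgeLists : refute 41 edgeLists = true := by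
  decide +kernel

theorem penrose4040_eq : penrose4040 = edgeLists.map List.toFinset := by
  decide +kernel

theorem penrose4040_is_KS : ¬ ∃ f : ℕ → Bool, admissible penrose4040 f := by
  rintro ⟨f, hf⟩
  refine refute_sound f 41 edgeLists refute_edgeLists ?_
  intro e he
  have h := hf e.toFinset (by rw [penrose4040_eq]; exact List.mem_map_of_mem he)
  obtain ⟨v, hv⟩ := Finset.card_eq_one.1 h
  have key : ∀ w, (w ∈ e ∧ f w = true) ↔ w = v := by
    intro w
    have := Finset.ext_iff.1 hv w
    simpa using this
  exact ⟨v, ((key v).2 rfl).1, ((key v).2 rfl).2, fun w hw hfw => (key w).1 ⟨hw, hfw⟩⟩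
end

section
/- The hypergraph on 34 vertices {1,...,9,A,...,Y} with the 9 hyperedges 12345678, 9ABCDEFG, HIJKLMFG, NOPQME78, RSTULD56, VWXUKC46, XTPQJB36, YVWOIA28, YRSNH918 (the first 34-9 set in dimension 8) is a critical KS hypergraph: it admits no admissible {0,1}-assignment, and for every one of its 9 hyperedges, deleting that hyperedge yields a hypergraph that admits an admissible {0,1}-assignment. -/
def ks349a : List (Finset ℕ) :=
  [{1, 2, 3, 4, 5, 6, 7, 8},
   {9, 10, 11, 12, 13, 14, 15, 16},
   {17, 18, 19, 20, 21, 22, 15, 16},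
   {23, 24, 25, 26, 22, 14, 7, 8},
   {27, 28, 29, 30, 21, 13, 5, 6},
   {31, 32, 33, 30, 20, 12, 4, 6},
   {33, 29, 25, 26, 19, 11, 3, 6},
   {34, 31, 32, 24, 18, 10, 2, 8},
   {34, 27, 28, 23, 17, 9, 1, 8}]

theorem ks349a_critical_KS :
    (¬ ∃ f : ℕ → Bool, admissible ks349a f) ∧
    ∀ e ∈ ks349a, ∃ f : ℕ → Bool,
      ∀ e' ∈ ks349a, e' ≠ e → (e'.filter (fun v => f v = true)).card = 1 := by
  constructor
  · rintro ⟨f, hf⟩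
    have key : ∀ e ∈ ks349a, ∑ v ∈ e, (if f v = true then 1 else 0) = 1 := by
      intro e he
      rw [← Finset.card_filter]
      exact hf e he
    generalize hg : (fun v => if f v = true then 1 else 0 : ℕ → ℕ) = g at key
    clear hg hf
    simp [ks349a] at key
    -- every vertex has even degree, but there are nine hyperedges
    omega
  · intro e he
    simp only [ks349a, List.mem_cons, List.not_mem_nil, or_false] at he
    rcases he with rfl | rfl | rfl | rfl | rfl | rfl | rfl | rfl | rfl
    · exact ⟨fun v => decide (v ∈ ([9, 18, 25, 30] : List ℕ)), by decide⟩
    · exact ⟨fun v => decide (v ∈ ([1, 18, 25, 30] : List ℕ)), by decide⟩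
    · exact ⟨fun v => decide (v ∈ ([1, 10, 25, 30] : List ℕ)), by decide⟩
    · exact ⟨fun v => decide (v ∈ ([1, 10, 19, 30] : List ℕ)), by decide⟩
    · exact ⟨fun v => decide (v ∈ ([1, 10, 20, 25] : List ℕ)), by decide⟩
    · exact ⟨fun v => decide (v ∈ ([1, 10, 20, 25, 30] : List ℕ)), by decide⟩
    · exact ⟨fun v => decide (v ∈ ([1, 10, 19, 25, 29, 33] : List ℕ)), by decide⟩
    · exact ⟨fun v => decide (v ∈ ([1, 10, 18, 24, 29, 31] : List ℕ)), by decide⟩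
    · exact ⟨fun v => decide (v ∈ ([1, 9, 17, 23, 27, 33, 34] : List ℕ)), by decide⟩
end

section
/- The hypergraph on 34 vertices {1,...,9,A,...,Y} with the 9 hyperedges 12345678, 9ABC5678, DEFG3478, HIJKLMFG, NOPQRMEC, STUQRLDB, VWUPJK9A, XYWTOI28, XYVSNH17 (the second 34-9 set in dimension 8, nonisomorphic to the first) is a critical KS hypergraph: it admits no admissible {0,1}-assignment, and for every one of its 9 hyperedges, deleting that hyperedge yields a hypergraph that admits an admissible {0,1}-assignment. -/
def ks349b : List (Finset ℕ) :=
  [{1, 2, 3, 4, 5, 6, 7, 8},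
   {9, 10, 11, 12, 5, 6, 7, 8},
   {13, 14, 15, 16, 3, 4, 7, 8},
   {17, 18, 19, 20, 21, 22, 15, 16},
   {23, 24, 25, 26, 27, 22, 14, 12},
   {28, 29, 30, 26, 27, 21, 13, 11},
   {31, 32, 30, 25, 19, 20, 9, 10},
   {33, 34, 32, 29, 24, 18, 2, 8},
   {33, 34, 31, 28, 23, 17, 1, 7}]

theorem ks349b_critical_KS :
    (¬ ∃ f : ℕ → Bool, admissible ks349b f) ∧
    ∀ e ∈ ks349b, ∃ f : ℕ → Bool,
      ∀ e' ∈ ks349b, e' ≠ e → (e'.filter (fun v => f v = true)).card = 1 := by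
  constructor
  · rintro ⟨f, hf⟩
    -- every vertex lies in an even number of hyperedges, while there are 9 hyperedges
    simp only [admissible, ks349b, List.forall_mem_cons, Finset.card_filter] at hf
    obtain ⟨h1, h2, h3, h4, h5, h6, h7, h8, h9, -⟩ := hf
    generalize (fun v : ℕ => if f v = true then 1 else 0) = g at h1 h2 h3 h4 h5 h6 h7 h8 h9
    simp [Finset.sum_insert] at h1 h2 h3 h4 h5 h6 h7 h8 h9
    omega
  · simp only [ks349b, List.forall_mem_cons]
    refine ⟨⟨fun v => decide (v ∈ ([5, 3, 17, 24, 30] : List ℕ)), by decide⟩,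
      ⟨fun v => decide (v ∈ ([1, 13, 18, 12, 9] : List ℕ)), by decide⟩,
      ⟨fun v => decide (v ∈ ([1, 9, 15, 14, 29] : List ℕ)), by decide⟩,
      ⟨fun v => decide (v ∈ ([1, 9, 13, 22, 18] : List ℕ)), by decide⟩,
      ⟨fun v => decide (v ∈ ([1, 9, 13, 18] : List ℕ)), by decide⟩,
      ⟨fun v => decide (v ∈ ([1, 9, 13, 18, 26] : List ℕ)), by decide⟩,
      ⟨fun v => decide (v ∈ ([1, 9, 13, 18, 25] : List ℕ)), by decide⟩,
      ⟨fun v => decide (v ∈ ([1, 9, 13, 18, 24] : List ℕ)), by decide⟩,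
      ⟨fun v => decide (v ∈ ([1, 9, 13, 17, 23, 33] : List ℕ)), by decide⟩, by simp⟩
end

section
/- Let (V,E) be a hypergraph and let e ∈ E be a hyperedge with at least 2 vertices such that at most one vertex of e belongs to the union of the other hyperedges (all remaining vertices of e lie in no other hyperedge). Then (V,E) admits an admissible {0,1}-assignment if and only if (V, E \ {e}) admits an admissible {0,1}-assignment. In particular, a hyperedge attached to the rest of the hypergraph by just one vertex is structurally irrelevant for the existence of an admissible assignment. -/
theorem dangling_edge_irrelevant {V : Type*} [DecidableEq V]
    (E : Finset (Finset V)) (e : Finset V) (he : e ∈ E) (hcard : 2 ≤ e.card)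
    (hshared : (e ∩ (E.erase e).sup id).card ≤ 1) :
    (∃ f : V → Bool, ∀ e' ∈ E, (e'.filter (fun v => f v = true)).card = 1) ↔
    (∃ f : V → Bool, ∀ e' ∈ E.erase e, (e'.filter (fun v => f v = true)).card = 1) := by
  constructor
  · rintro ⟨f, hf⟩
    exact ⟨f, fun e' h => hf e' (Finset.mem_of_mem_erase h)⟩
  · rintro ⟨f, hf⟩
    set U := (E.erase e).sup id with hU
    have hy : ∃ y ∈ e, ∀ v ∈ e, v ∈ U → (f v = true ↔ v = y) := by
      by_cases hx : ∃ x ∈ e ∩ U, f x = true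
      · obtain ⟨x, hx, hfx⟩ := hx
        refine ⟨x, (Finset.mem_inter.1 hx).1, fun v hv hvU => ?_⟩
        have hvx : v = x :=
          Finset.card_le_one.1 hshared v (Finset.mem_inter.2 ⟨hv, hvU⟩) x hx
        subst hvx
        simp [hfx]
      · have hw : ∃ w ∈ e, w ∉ U := by
          by_contra! h
          rw [Finset.inter_eq_left.2 h] at hshared
          omega
        obtain ⟨w, hwe, hwU⟩ := hw
        refine ⟨w, hwe, fun v hv hvU => ⟨fun h => ?_, fun h => ?_⟩⟩
        · exact absurd ⟨v, Finset.mem_inter.2 ⟨hv, hvU⟩, h⟩ hx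
        · exact absurd (h ▸ hvU) hwU
    obtain ⟨y, hye, hy⟩ := hy
    refine ⟨fun v => if v ∈ e then decide (v = y) else f v, fun e' he' => ?_⟩
    by_cases hee : e' = e
    · subst hee
      rw [Finset.card_eq_one]
      refine ⟨y, ?_⟩
      ext v
      by_cases hv : v ∈ e' <;> simp [hv]
      rintro rfl
      exact hv hye
    · have hm : e' ∈ E.erase e := Finset.mem_erase.2 ⟨hee, he'⟩
      rw [← hf e' hm]
      congr 1
      apply Finset.filter_congr
      intro v hv
      have hvU : v ∈ U := (Finset.le_sup (f := id) hm : e' ≤ U) hv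
      by_cases hve : v ∈ e
      · simp [hve, hy v hve hvU]
      · simp [hve]
end

section
/- Let ω = e^{2πi/3} ∈ ℂ. Define the 40 vectors in ℂ^4: 1=(0,0,0,1), 2=(0,1,1,1), 3=(0,0,1,0), 4=(1,-1,1,0), 5=(ω,1,0,-1), 6=(ω,0,-1,1), 7=(0,1,0,0), 8=(1,0,-1,1), 9=(1,ω,0,-1), A=(ω²,-1,ω,0), B=(-1,ω,-1,0), C=(0,1,ω,ω²), D=(ω,ω²,0,-1), E=(1,0,-1,ω), F=(ω²,0,-1,ω), G=(-1,-1,0,ω²), H=(1,0,-1,ω²), I=(-1,ω²,-1,0), J=(ω²,-1,1,0), K=(ω²,1,0,-1), L=(ω,-1,1,0), M=(1,0,0,0), N=(1,1,0,-1), O=(-1,-1,0,ω), P=(ω,-1,ω²,0), Q=(1,-1,ω²,0), R=(ω²,0,-1,1), S=(1,ω²,0,-1), T=(0,1,1,ω²), U=(0,1,ω,1), V=(1,-1,ω,0), W=(0,1,ω²,ω), X=(ω²,ω,0,-1), Y=(0,1,1,ω), Z=(0,1,ω²,1), a=(0,ω,1,1), b=(-1,0,ω²,-1), c=(0,ω²,1,1),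 d=(-1,0,ω,-1), e=(ω,0,-1,ω²). For each of the 40 quadruples 248N, 359O, 6ADc, 67Ed, 78Fe, 89Ba, BDHW, BEKZ, 1BLV, 9ACb, 4EOY, 3GKS, 4GHT, 7HRb, 5HIU, 8ISc, CEIX, 1IJQ, 2JKR, 9JTd, DFJY, 256L, LSYb, LTXe, 137M, 2CMW, MTZc, MUYa, 3DNX, 14AP, 5FPZ, PRXa, PSWd, 6GQa, NQZb, OQWe, AKUe, CFGV, NUVd, ORVc, the four corresponding vectors are nonzero and pairwise orthogonal with respect to the standard Hermitian inner product on ℂ^4. -/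
noncomputable def ω : ℂ := Complex.exp (2 * Real.pi * Complex.I / 3)

noncomputable def hdot (u v : Fin 4 → ℂ) : ℂ := ∑ i, (starRingEnd ℂ) (u i) * v i

noncomputable def v1 : Fin 4 → ℂ := ![0, 0, 0, 1]
noncomputable def v2 : Fin 4 → ℂ := ![0, 1, 1, 1]
noncomputable def v3 : Fin 4 → ℂ := ![0, 0, 1, 0]
noncomputable def v4 : Fin 4 → ℂ := ![1, (-1), 1, 0]
noncomputable def v5 : Fin 4 → ℂ := ![ω, 1, 0, (-1)]
noncomputable def v6 : Fin 4 → ℂ := ![ω, 0, (-1), 1]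
noncomputable def v7 : Fin 4 → ℂ := ![0, 1, 0, 0]
noncomputable def v8 : Fin 4 → ℂ := ![1, 0, (-1), 1]
noncomputable def v9 : Fin 4 → ℂ := ![1, ω, 0, (-1)]
noncomputable def vA : Fin 4 → ℂ := ![ω^2, (-1), ω, 0]
noncomputable def vB : Fin 4 → ℂ := ![(-1), ω, (-1), 0]
noncomputable def vC : Fin 4 → ℂ := ![0, 1, ω, ω^2]
noncomputable def vD : Fin 4 → ℂ := ![ω, ω^2, 0, (-1)]
noncomputable def vE : Fin 4 → ℂ := ![1, 0, (-1), ω]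
noncomputable def vF : Fin 4 → ℂ := ![ω^2, 0, (-1), ω]
noncomputable def vG : Fin 4 → ℂ := ![(-1), (-1), 0, ω^2]
noncomputable def vH : Fin 4 → ℂ := ![1, 0, (-1), ω^2]
noncomputable def vI : Fin 4 → ℂ := ![(-1), ω^2, (-1), 0]
noncomputable def vJ : Fin 4 → ℂ := ![ω^2, (-1), 1, 0]
noncomputable def vK : Fin 4 → ℂ := ![ω^2, 1, 0, (-1)]
noncomputable def vL : Fin 4 → ℂ := ![ω, (-1), 1, 0]
noncomputable def vM : Fin 4 → ℂ := ![1, 0, 0, 0]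
noncomputable def vN : Fin 4 → ℂ := ![1, 1, 0, (-1)]
noncomputable def vO : Fin 4 → ℂ := ![(-1), (-1), 0, ω]
noncomputable def vP : Fin 4 → ℂ := ![ω, (-1), ω^2, 0]
noncomputable def vQ : Fin 4 → ℂ := ![1, (-1), ω^2, 0]
noncomputable def vR : Fin 4 → ℂ := ![ω^2, 0, (-1), 1]
noncomputable def vS : Fin 4 → ℂ := ![1, ω^2, 0, (-1)]
noncomputable def vT : Fin 4 → ℂ := ![0, 1, 1, ω^2]
noncomputable def vU : Fin 4 → ℂ := ![0, 1, ω, 1]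
noncomputable def vV : Fin 4 → ℂ := ![1, (-1), ω, 0]
noncomputable def vW : Fin 4 → ℂ := ![0, 1, ω^2, ω]
noncomputable def vX : Fin 4 → ℂ := ![ω^2, ω, 0, (-1)]
noncomputable def vY : Fin 4 → ℂ := ![0, 1, 1, ω]
noncomputable def vZ : Fin 4 → ℂ := ![0, 1, ω^2, 1]
noncomputable def va : Fin 4 → ℂ := ![0, ω, 1, 1]
noncomputable def vb : Fin 4 → ℂ := ![(-1), 0, ω^2, (-1)]
noncomputable def vc : Fin 4 → ℂ := ![0, ω^2, 1, 1]
noncomputable def vd : Fin 4 → ℂ := ![(-1), 0, ω, (-1)]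
noncomputable def ve : Fin 4 → ℂ := ![ω, 0, (-1), ω^2]

noncomputable def tuples : List (List (Fin 4 → ℂ)) :=
  [[v2, v4, v8, vN],
   [v3, v5, v9, vO],
   [v6, vA, vD, vc],
   [v6, v7, vE, vd],
   [v7, v8, vF, ve],
   [v8, v9, vB, va],
   [vB, vD, vH, vW],
   [vB, vE, vK, vZ],
   [v1, vB, vL, vV],
   [v9, vA, vC, vb],
   [v4, vE, vO, vY],
   [v3, vG, vK, vS],
   [v4, vG, vH, vT],
   [v7, vH, vR, vb],
   [v5, vH, vI, vU],
   [v8, vI, vS, vc],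
   [vC, vE, vI, vX],
   [v1, vI, vJ, vQ],
   [v2, vJ, vK, vR],
   [v9, vJ, vT, vd],
   [vD, vF, vJ, vY],
   [v2, v5, v6, vL],
   [vL, vS, vY, vb],
   [vL, vT, vX, ve],
   [v1, v3, v7, vM],
   [v2, vC, vM, vW],
   [vM, vT, vZ, vc],
   [vM, vU, vY, va],
   [v3, vD, vN, vX],
   [v1, v4, vA, vP],
   [v5, vF, vP, vZ],
   [vP, vR, vX, va],
   [vP, vS, vW, vd],
   [v6, vG, vQ, va],
   [vN, vQ, vZ, vb],
   [vO, vQ, vW, ve],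
   [vA, vK, vU, ve],
   [vC, vF, vG, vV],
   [vN, vU, vV, vd],
   [vO, vR, vV, vc]]

theorem omega_poly : ω ^ 2 + ω + 1 = 0 := by
  have hp : IsPrimitiveRoot ω 3 := by
    have := Complex.isPrimitiveRoot_exp 3 (by norm_num)
    simpa [ω] using this
  have h3 := hp.pow_eq_one
  have h1 : ω - 1 ≠ 0 := sub_ne_zero.mpr (hp.ne_one (by norm_num))
  apply mul_left_cancel₀ h1
  linear_combination h3

theorem omega_sq : ω ^ 2 = -1 - ω := by linear_combination omega_poly

theorem omega_conj : (starRingEnd ℂ) ω = -1 - ω := by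
  have hp : ω ^ 3 = 1 := by linear_combination (ω - 1) * omega_poly
  have hn : ‖ω‖ = 1 := Complex.norm_eq_one_of_pow_eq_one hp (by norm_num)
  have hc : (starRingEnd ℂ) ω * ω = 1 := by
    rw [Complex.conj_mul', hn]; norm_num
  linear_combination ω ^ 2 * hc - (starRingEnd ℂ) ω * hp + omega_poly

set_option linter.unusedSimpArgs false in
set_option maxHeartbeats 4000000 in
theorem penrose4040_ortho :
    ∀ t ∈ tuples, (∀ v ∈ t, v ≠ (0 : Fin 4 → ℂ)) ∧
      List.Pairwise (fun u v => hdot u v = 0) t := by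
  have hw := omega_poly
  have key : ∀ u v : Fin 4 → ℂ, hdot u v = (starRingEnd ℂ) (u 0) * v 0 +
      (starRingEnd ℂ) (u 1) * v 1 + (starRingEnd ℂ) (u 2) * v 2 +
      (starRingEnd ℂ) (u 3) * v 3 := fun u v => by simp [hdot, Fin.sum_univ_four]
  have nz : ∀ (a b c d : ℂ), (a = 1 ∨ a = -1 ∨ b = 1 ∨ b = -1 ∨ c = 1 ∨ c = -1 ∨ d = 1 ∨ d = -1) →
      ![a, b, c, d] ≠ (0 : Fin 4 → ℂ) := by
    intro a b c d h h0
    have e0 := congrFun h0 0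
    have e1 := congrFun h0 1
    have e2 := congrFun h0 2
    have e3 := congrFun h0 3
    simp at e0 e1 e2 e3
    subst e0 e1 e2 e3
    norm_num at h
  unfold tuples
  simp only [List.forall_mem_cons, List.pairwise_cons, List.Pairwise.nil,
    List.not_mem_nil, false_imp_iff, implies_true, and_true]
  repeat' refine And.intro ?_ ?_
  all_goals first
    | (rw [key]
       simp only [v1, v2, v3, v4, v5, v6, v7, v8, v9, vA, vB, vC, vD, vE, vF, vG, vH, vI, vJ, vK,
         vL, vM, vN, vO, vP, vQ, vR, vS, vT, vU, vV, vW, vX, vY, vZ, va, vb, vc, vd, ve,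
         Matrix.cons_val, map_neg, map_one, map_zero, map_pow, omega_conj]
       grind)
    | (apply nz; simp)
end
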